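/- Let N be a positive integer, f ∈ M_N(ℂ), and 0 < δ ≤ 1/4. If ‖f‖ ≤ 1, ‖f² − f‖₂ < δ, and ‖f* − f‖₂ < δ, then there exists a projection p ∈ M_N(ℂ) (p = p* = p²) such that ‖f − p‖₂ < 6·δ^{1/4}. -/

import Mathlib

open scoped Matrix

/-- The normalized 2-norm `‖a‖₂ = sqrt(τ(a*a))` on `M_N(ℂ)`, where `τ = tr/N`. -/
noncomputable def l2Norm {N : ℕ} (a : Matrix (Fin N) (Fin N) ℂ) : ℝ :=
  Real.sqrt ((Matrix.trace (aᴴ * a)).re / N)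

/-- The operator norm of a matrix acting on the standard Hermitian space `ℂ^N`. -/
noncomputable def opNorm {N : ℕ} (a : Matrix (Fin N) (Fin N) ℂ) : ℝ :=
  ‖Matrix.toEuclideanCLM (𝕜 := ℂ) a‖


theorem np_sq {N : ℕ} (a : Matrix (Fin N) (Fin N) ℂ) :
    (Matrix.trace (aᴴ * a)).re = ∑ j, ∑ i, ‖a i j‖ ^ 2 := by
  simp only [Matrix.trace, Matrix.diag, Matrix.mul_apply, Matrix.conjTranspose_apply,
    Complex.re_sum]
  refine Finset.sum_congr rfl fun j _ => Finset.sum_congr rfl fun i _ => ?_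
  rw [Complex.sq_norm, Complex.normSq_apply]
  simp

section frob
attribute [local instance] Matrix.frobeniusNormedAddCommGroup Matrix.frobeniusNormedSpace

theorem np_l2 {N : ℕ} (a : Matrix (Fin N) (Fin N) ℂ) :
    l2Norm a = ‖a‖ / Real.sqrt N := by
  rw [l2Norm, np_sq, Real.sqrt_div' _ (by positivity), Matrix.frobenius_norm_def, Finset.sum_comm,
    Real.sqrt_eq_rpow]
  simp

theorem np_add {N : ℕ} (a b : Matrix (Fin N) (Fin N) ℂ) :
    l2Norm (a + b) ≤ l2Norm a + l2Norm b := by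
  simp only [np_l2, ← add_div]
  gcongr
  exact norm_add_le a b

theorem np_smul {N : ℕ} (c : ℂ) (a : Matrix (Fin N) (Fin N) ℂ) :
    l2Norm (c • a) = ‖c‖ * l2Norm a := by
  simp only [np_l2, norm_smul, mul_div_assoc]

theorem np_star {N : ℕ} (a : Matrix (Fin N) (Fin N) ℂ) :
    l2Norm aᴴ = l2Norm a := by
  simp only [np_l2, Matrix.frobenius_norm_conjTranspose]
end frob

theorem np_mul {N : ℕ} (a b : Matrix (Fin N) (Fin N) ℂ) (ha : opNorm a ≤ 1) :
    l2Norm (a * b) ≤ l2Norm b := by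
  unfold l2Norm
  apply Real.sqrt_le_sqrt
  rw [np_sq, np_sq]
  refine div_le_div_of_nonneg_right ?_ (Nat.cast_nonneg N)
  refine Finset.sum_le_sum fun j _ => ?_
  have h := (Matrix.toEuclideanCLM (𝕜 := ℂ) a).le_of_opNorm_le ha
    (WithLp.toLp 2 (fun i => b i j))
  rw [one_mul] at h
  have h' := pow_le_pow_left₀ (norm_nonneg _) h 2
  rw [EuclideanSpace.norm_sq_eq, EuclideanSpace.norm_sq_eq] at h'
  exact h'

theorem np_opstar {N : ℕ} (a : Matrix (Fin N) (Fin N) ℂ) : opNorm aᴴ = opNorm a := by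
  exact Matrix.l2_opNorm_conjTranspose a

theorem np_herm {N : ℕ} (h : Matrix (Fin N) (Fin N) ℂ) (hh : h.IsHermitian) :
    ∃ p : Matrix (Fin N) (Fin N) ℂ, pᴴ = p ∧ p * p = p ∧
      l2Norm (h - p) ≤ 2 * l2Norm (h * h - h) := by
  obtain ⟨U, D, hU, hD⟩ : ∃ (U : Matrix (Fin N) (Fin N) ℂ) (D : Fin N → ℝ), Uᴴ * U = 1 ∧
      h = U * Matrix.diagonal (fun i => (D i : ℂ)) * Uᴴ := by
    refine ⟨hh.eigenvectorUnitary, hh.eigenvalues, ?_, ?_⟩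
    · rw [← Matrix.star_eq_conjTranspose]
      simp
    · have := hh.spectral_theorem
      rw [Unitary.conjStarAlgAut_apply] at this
      exact this
  have key : ∀ E : Fin N → ℝ, l2Norm (U * Matrix.diagonal (fun i => (E i : ℂ)) * Uᴴ)
      = Real.sqrt ((∑ i, E i ^ 2) / N) := by
    intro E
    unfold l2Norm
    congr 2
    have e : (U * Matrix.diagonal (fun i => (E i : ℂ)) * Uᴴ)ᴴ *
        (U * Matrix.diagonal (fun i => (E i : ℂ)) * Uᴴ)
        = U * (Matrix.diagonal (fun i => (E i : ℂ)) * Matrix.diagonal (fun i => (E i : ℂ)) * Uᴴ) := by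
      simp only [Matrix.conjTranspose_mul, Matrix.conjTranspose_conjTranspose,
        Matrix.diagonal_conjTranspose]
      have : star (fun i => (E i : ℂ)) = fun i => (E i : ℂ) := by
        ext i; simp
      rw [this]
      simp only [Matrix.mul_assoc]
      rw [← Matrix.mul_assoc Uᴴ U, hU, Matrix.one_mul]
    rw [e, Matrix.trace_mul_comm, Matrix.mul_assoc, hU, Matrix.mul_one, Matrix.diagonal_mul_diagonal,
      Matrix.trace_diagonal, Complex.re_sum]
    refine Finset.sum_congr rfl fun i _ => ?_
    simp [sq]
  have mulk : ∀ E F : Fin N → ℝ, (U * Matrix.diagonal (fun i => (E i : ℂ)) * Uᴴ) *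
      (U * Matrix.diagonal (fun i => (F i : ℂ)) * Uᴴ) =
      U * Matrix.diagonal (fun i => ((E i * F i : ℝ) : ℂ)) * Uᴴ := by
    intro E F
    simp only [Matrix.mul_assoc]
    rw [← Matrix.mul_assoc Uᴴ U, hU, Matrix.one_mul, ← Matrix.mul_assoc (Matrix.diagonal _),
      Matrix.diagonal_mul_diagonal]
    simp
  have subk : ∀ E F : Fin N → ℝ, (U * Matrix.diagonal (fun i => (E i : ℂ)) * Uᴴ) -
      (U * Matrix.diagonal (fun i => (F i : ℂ)) * Uᴴ) =
      U * Matrix.diagonal (fun i => ((E i - F i : ℝ) : ℂ)) * Uᴴ := by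
    intro E F
    rw [← Matrix.sub_mul, ← Matrix.mul_sub, Matrix.diagonal_sub]
    simp
  let P : Fin N → ℝ := fun i => if 1 / 2 ≤ D i then 1 else 0
  refine ⟨U * Matrix.diagonal (fun i => (P i : ℂ)) * Uᴴ, ?_, ?_, ?_⟩
  · simp only [Matrix.conjTranspose_mul, Matrix.conjTranspose_conjTranspose,
        Matrix.diagonal_conjTranspose]
    have : star (fun i => (P i : ℂ)) = fun i => (P i : ℂ) := by
      ext i; simp
    rw [this, Matrix.mul_assoc]
  · rw [mulk]
    have : ∀ i, P i * P i = P i := fun i => by simp only [P]; split_ifs <;> simp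
    simp only [this]
  · rw [hD, mulk, subk, subk, key, key]
    have h4 : (2 : ℝ) = Real.sqrt 4 := by
      rw [show (4 : ℝ) = 2 ^ 2 by norm_num]; simp
    rw [h4, ← Real.sqrt_mul (by norm_num)]
    apply Real.sqrt_le_sqrt
    rw [← mul_div_assoc, Finset.mul_sum]
    gcongr with i
    simp only [P]
    split_ifs with hi
    · nlinarith [mul_nonneg (sq_nonneg (D i - 1)) (show 0 ≤ 4 * D i ^ 2 - 1 by nlinarith)]
    · nlinarith [mul_nonneg (sq_nonneg (D i)) (show 0 ≤ 4 * (D i - 1) ^ 2 - 1 by nlinarith)]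

/-- An element which is almost a projection is 2-norm close to an actual projection
(Jones, Lemma 3.2.7, in a matrix algebra). -/
theorem near_projection
    (N : ℕ) (hN : 0 < N) (f : Matrix (Fin N) (Fin N) ℂ) (δ : ℝ)
    (hδ0 : 0 < δ) (hδ : δ ≤ 1 / 4)
    (hf : opNorm f ≤ 1)
    (h1 : l2Norm (f * f - f) < δ)
    (h2 : l2Norm (fᴴ - f) < δ) :
    ∃ p : Matrix (Fin N) (Fin N) ℂ,
      pᴴ = p ∧ p * p = p ∧ l2Norm (f - p) < 6 * δ ^ ((1 : ℝ) / 4) := by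
  obtain ⟨p, hp1, hp2, hp3⟩ := np_herm ((1 / 2 : ℂ) • (f + fᴴ)) (by
    rw [Matrix.IsHermitian, Matrix.conjTranspose_smul, Matrix.conjTranspose_add,
      Matrix.conjTranspose_conjTranspose, add_comm]
    simp)
  refine ⟨p, hp1, hp2, ?_⟩
  set h := (1 / 2 : ℂ) • (f + fᴴ) with hh
  have e1 : h * h - h = ((1 / 2 : ℂ) • (f * f - f) + (1 / 2 : ℂ) • (f * f - f)ᴴ) +
      ((-1 / 4 : ℂ) • (fᴴ * (fᴴ - f)) + (1 / 4 : ℂ) • (f * (fᴴ - f))) := by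
    rw [hh, Matrix.conjTranspose_sub, Matrix.conjTranspose_mul]
    simp only [Matrix.mul_sub, Matrix.add_mul, Matrix.mul_add, Matrix.smul_mul, Matrix.mul_smul]
    module
  have e2 : f - p = (h - p) + (-1 / 2 : ℂ) • (fᴴ - f) := by
    rw [hh]; module
  have n1 : ‖(1 / 2 : ℂ)‖ = 1 / 2 := by norm_num
  have n2 : ‖(-1 / 4 : ℂ)‖ = 1 / 4 := by norm_num
  have n3 : ‖(1 / 4 : ℂ)‖ = 1 / 4 := by norm_num
  have n4 : ‖(-1 / 2 : ℂ)‖ = 1 / 2 := by norm_num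
  have b1 : l2Norm (h * h - h) ≤ 3 / 2 * δ := by
    rw [e1]
    have t := np_add ((1 / 2 : ℂ) • (f * f - f) + (1 / 2 : ℂ) • (f * f - f)ᴴ)
      ((-1 / 4 : ℂ) • (fᴴ * (fᴴ - f)) + (1 / 4 : ℂ) • (f * (fᴴ - f)))
    have t1 := np_add ((1 / 2 : ℂ) • (f * f - f)) ((1 / 2 : ℂ) • (f * f - f)ᴴ)
    have t2 := np_add ((-1 / 4 : ℂ) • (fᴴ * (fᴴ - f))) ((1 / 4 : ℂ) • (f * (fᴴ - f)))
    rw [np_smul, np_smul, np_star, n1] at t1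
    rw [np_smul, np_smul, n2, n3] at t2
    have m1 := np_mul f (fᴴ - f) hf
    have m2 := np_mul fᴴ (fᴴ - f) (by rwa [np_opstar])
    linarith
  have b2 : l2Norm (f - p) ≤ 7 / 2 * δ := by
    rw [e2]
    have t := np_add (h - p) ((-1 / 2 : ℂ) • (fᴴ - f))
    rw [np_smul, n4] at t
    linarith
  have b3 : δ ≤ δ ^ ((1 : ℝ) / 4) := by
    conv_lhs => rw [← Real.rpow_one δ]
    exact Real.rpow_le_rpow_of_exponent_ge hδ0 (by linarith) (by norm_num)
  linarith
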